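/- Let σ ∈ PGL₂(ℚ) be given by σ(z) = (z − 1)/(3z + 1), an element of order 3. Then for every algebraic number α with α ∉ {0, 1, −1}, h(α) + h(σ(α)) + h(σ²(α)) ≥ log 5, with equality for α = i. -/

import Mathlib

/- For a nonzero `f ∈ ℤ[X]`, the Mahler measure `M(f) = |a_n| ∏ max(|α_i|,1)`. -/
open Polynomial

noncomputable def mahlerMeasure (f : ℤ[X]) : ℝ :=
  |(f.leadingCoeff : ℝ)| *
    (((f.map (Int.castRingHom ℂ)).roots).map (fun z => max ‖z‖ 1)).prod

/-- The primitive minimal polynomial over `ℤ` of an algebraic number. -/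
noncomputable def intMinpoly (α : ℂ) : ℤ[X] :=
  (IsLocalization.integerNormalization (nonZeroDivisors ℤ) (minpoly ℚ α)).primPart

/-- The absolute logarithmic Weil height `h(α) = (1/n) log M(f)`. -/
noncomputable def height (α : ℂ) : ℝ :=
  Real.log (mahlerMeasure (intMinpoly α)) / (minpoly ℚ α).natDegree

/-!
The constant coefficient of the primitive minimal polynomial of `β ≠ 0` is a nonzero integer, so by
Vieta's formula `h(β)` is at least the mean of `log⁺ |1 / τ(β)|` over the embeddings `τ` of any
number field containing `β`. Since an embedding commutes with `σ`, the lower bound follows from a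
pointwise inequality on `ℂ`, which in terms of `w = 1 / z` reads
`5 ≤ max 1 |w| * max 1 |(3 + w) / (1 - w)| * max 1 |(w - 3) / (1 + w)|`.
Two of the factors suffice on `|w| ≤ 1` and on `|Re w| ≥ 1`, and all three are used on the rest of
the strip `|Re w| ≤ 1`. For the equality, the minimal polynomials of `i`, `σ(i)` and `σ²(i)` are
`X² + 1`, `5X² - 2X + 1` and `5X² + 2X + 1`, whose roots lie in the closed unit disc, so their
Mahler measures are their leading coefficients.
-/

section MahlerMeasure

open Real

theorem mahlerMeasure_eq_mahlerMeasure_map (f : ℤ[X]) :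
    _root_.mahlerMeasure f = (f.map (Int.castRingHom ℂ)).mahlerMeasure := by
  simp only [_root_.mahlerMeasure, mahlerMeasure_eq_leadingCoeff_mul_prod_roots,
    leadingCoeff_map_of_injective (Int.castRingHom ℂ).injective_int, eq_intCast,
    Complex.norm_intCast, max_comm]

theorem mahlerMeasure_eq_of_associated {f g : ℤ[X]} (h : Associated f g) :
    _root_.mahlerMeasure f = _root_.mahlerMeasure g := by
  obtain ⟨u, rfl⟩ := h
  obtain ⟨r, hr, hru⟩ := Polynomial.isUnit_iff.mp u.isUnit
  have hr_norm : ‖(r : ℂ)‖ = 1 := by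
    rw [Complex.norm_intCast]
    exact_mod_cast Int.isUnit_iff_abs_eq.mp hr
  rw [mahlerMeasure_eq_mahlerMeasure_map, mahlerMeasure_eq_mahlerMeasure_map, Polynomial.map_mul,
    ← hru, Polynomial.map_C, mahlerMeasure_mul, mahlerMeasure_const, eq_intCast, hr_norm, mul_one]

theorem logMahlerMeasure_eq_log_coeff_zero_add_sum_posLog {p : ℂ[X]} (hp : p.coeff 0 ≠ 0) :
    p.logMahlerMeasure =
      log ‖p.coeff 0‖ + (p.roots.map fun z ↦ log⁺ ‖z⁻¹‖).sum := by
  have h_lead : p.leadingCoeff ≠ 0 := leadingCoeff_ne_zero.mpr fun h ↦ hp (by simp [h])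
  have h_roots : ∀ t ∈ p.roots.map norm, t ≠ 0 := by
    simp only [Multiset.mem_map, forall_exists_index, and_imp, forall_apply_eq_imp_iff₂,
      norm_ne_zero_iff]
    rintro z hz rfl
    exact hp ((zero_isRoot_iff_coeff_zero_eq_zero).mp (isRoot_of_mem_roots hz))
  have h_vieta : ‖p.coeff 0‖ = ‖p.leadingCoeff‖ * (p.roots.map norm).prod := by
    simp only [(IsAlgClosed.splits p).coeff_zero_eq_leadingCoeff_mul_prod_roots, norm_mul, norm_pow,
      norm_neg, norm_one, one_pow, one_mul]
    exact congrArg _ (map_multiset_prod (normHom : ℂ →*₀ ℝ) p.roots)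
  have h_log : log ‖p.coeff 0‖ = log ‖p.leadingCoeff‖ + (p.roots.map fun z ↦ log ‖z‖).sum := by
    rw [h_vieta, log_mul (norm_ne_zero_iff.mpr h_lead) (Multiset.prod_ne_zero fun h ↦
      h_roots 0 h rfl), log_multiset_prod h_roots, Multiset.map_map, Function.comp_def]
  rw [logMahlerMeasure_eq_log_leadingCoeff_add_sum_log_roots, h_log, add_assoc,
    ← Multiset.sum_map_add]
  simp only [norm_inv, ← posLog_sub_posLog_inv, sub_add_cancel]

theorem sum_posLog_norm_inv_roots_le_log_mahlerMeasure {f : ℤ[X]} (hf : f.coeff 0 ≠ 0) :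
    ((f.map (Int.castRingHom ℂ)).roots.map fun z ↦ log⁺ ‖z⁻¹‖).sum ≤
      log (_root_.mahlerMeasure f) := by
  have h_coeff : 0 ≤ log ‖(f.map (Int.castRingHom ℂ)).coeff 0‖ := by
    rw [coeff_map, eq_intCast, Complex.norm_intCast]
    exact log_nonneg (mod_cast Int.one_le_abs hf)
  rw [mahlerMeasure_eq_mahlerMeasure_map, ← logMahlerMeasure_eq_log_MahlerMeasure,
    logMahlerMeasure_eq_log_coeff_zero_add_sum_posLog (by simpa using hf)]
  exact le_add_of_nonneg_left h_coeff

end MahlerMeasure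

section IntMinpoly

variable {α : ℂ}

theorem associated_map_intMinpoly (hα : IsAlgebraic ℚ α) :
    Associated ((intMinpoly α).map (Int.castRingHom ℚ)) (minpoly ℚ α) := by
  set F := IsLocalization.integerNormalization (nonZeroDivisors ℤ) (minpoly ℚ α) with hF
  obtain ⟨b, hb, hbF⟩ := IsLocalization.integerNormalization_spec (nonZeroDivisors ℤ) (minpoly ℚ α)
  have hF_ne : F ≠ 0 :=
    IsFractionRing.integerNormalization_eq_zero_iff.not.mpr (minpoly.ne_zero hα.isIntegral)
  have associated_C_mul {n : ℤ} (hn : n ≠ 0) (p : ℚ[X]) : Associated (C (n : ℚ) * p) p :=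
    (associated_isUnit_mul_left_iff (isUnit_C.mpr (Int.cast_ne_zero.mpr hn).isUnit)).mpr .rfl
  have h_content : F.map (Int.castRingHom ℚ) =
      C (F.content : ℚ) * (intMinpoly α).map (Int.castRingHom ℚ) := by
    conv_lhs => rw [F.eq_C_content_mul_primPart]
    simp [intMinpoly, hF]
  have h_clear : F.map (Int.castRingHom ℚ) = C (b : ℚ) * minpoly ℚ α := by
    rw [← algebraMap_int_eq, hbF, zsmul_eq_mul, C_eq_intCast]
  have h_eq := h_content.symm.trans h_clear
  exact (associated_C_mul (mt content_eq_zero_iff.mp hF_ne) _).symm.trans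
    (h_eq ▸ associated_C_mul (nonZeroDivisors.ne_zero hb) _)

theorem roots_map_intMinpoly (hα : IsAlgebraic ℚ α) :
    ((intMinpoly α).map (Int.castRingHom ℂ)).roots = (minpoly ℚ α).aroots ℂ := by
  have h := (associated_map_intMinpoly hα).map (mapRingHom (algebraMap ℚ ℂ))
  rw [coe_mapRingHom, Polynomial.map_map, RingHom.eq_intCast' ((algebraMap ℚ ℂ).comp _)] at h
  exact h.roots_eq

theorem associated_intMinpoly {f : ℤ[X]} (hf : Irreducible f) (hα : aeval α f = 0) :
    Associated (intMinpoly α) f := by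
  have hf_prim : f.IsPrimitive := hf.isPrimitive
    (natDegree_pos_of_aeval_root hf.ne_zero hα fun _ ↦ by simp).ne'
  have hf_irr : Irreducible (f.map (Int.castRingHom ℚ)) :=
    (IsPrimitive.Int.irreducible_iff_irreducible_map_cast hf_prim).mp hf
  have hα_map : aeval α (f.map (Int.castRingHom ℚ)) = 0 := by
    rwa [← algebraMap_int_eq, aeval_map_algebraMap]
  have h_minpoly : Associated (minpoly ℚ α) (f.map (Int.castRingHom ℚ)) := by
    rw [← minpoly.eq_of_irreducible hf_irr hα_map]
    exact associated_mul_unit_left _ _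
      (isUnit_C.mpr (inv_ne_zero (leadingCoeff_ne_zero.mpr hf_irr.ne_zero)).isUnit)
  have h := (associated_map_intMinpoly ⟨_, hf_irr.ne_zero, hα_map⟩).trans h_minpoly
  exact associated_of_dvd_dvd
    ((IsPrimitive.Int.dvd_iff_map_cast_dvd_map_cast _ _ (isPrimitive_primPart _)).mpr h.dvd)
    ((IsPrimitive.Int.dvd_iff_map_cast_dvd_map_cast _ _ hf_prim).mpr h.symm.dvd)

theorem natDegree_intMinpoly (hα : IsAlgebraic ℚ α) :
    (intMinpoly α).natDegree = (minpoly ℚ α).natDegree := by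
  rw [← natDegree_eq_of_degree_eq (degree_eq_degree_of_associated (associated_map_intMinpoly hα)),
    natDegree_map_eq_of_injective (Int.castRingHom ℚ).injective_int]

end IntMinpoly

section Height

open Real Module IntermediateField

theorem height_nonneg (α : ℂ) : 0 ≤ height α := by
  refine div_nonneg (log_nonneg ?_) (Nat.cast_nonneg _)
  rw [mahlerMeasure_eq_mahlerMeasure_map]
  exact one_le_mahlerMeasure_of_ne_zero (primPart_ne_zero _)

theorem height_eq_of_irreducible {f : ℤ[X]} (hf : Irreducible f) {α : ℂ} (hα : aeval α f = 0) :
    height α = log (_root_.mahlerMeasure f) / f.natDegree := by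
  have h_assoc := associated_intMinpoly hf hα
  have h_alg : IsAlgebraic ℚ α :=
    (IsFractionRing.isAlgebraic_iff ℤ ℚ ℂ).mp ⟨f, hf.ne_zero, hα⟩
  rw [height, mahlerMeasure_eq_of_associated h_assoc, ← natDegree_intMinpoly h_alg,
    natDegree_eq_of_degree_eq (degree_eq_degree_of_associated h_assoc)]

theorem sum_posLog_norm_inv_aroots_minpoly_le {α : ℂ} (hα : IsAlgebraic ℚ α) :
    (((minpoly ℚ α).aroots ℂ).map fun z ↦ log⁺ ‖z⁻¹‖).sum ≤
      (minpoly ℚ α).natDegree * height α := by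
  have h_deg : ((minpoly ℚ α).natDegree : ℝ) ≠ 0 :=
    Nat.cast_ne_zero.mpr (minpoly.natDegree_pos hα.isIntegral).ne'
  rcases eq_or_ne α 0 with rfl | hα_ne
  · simpa [minpoly.zero] using height_nonneg 0
  have h_coeff : (intMinpoly α).coeff 0 ≠ 0 := fun h ↦ by
    have h_dvd : X ∣ minpoly ℚ α := by
      rw [← (associated_map_intMinpoly hα).dvd_iff_dvd_right, X_dvd_iff, coeff_map, h, map_zero]
    exact minpoly.coeff_zero_ne_zero hα.isIntegral hα_ne (X_dvd_iff.mp h_dvd)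
  rw [height, mul_div_cancel₀ _ h_deg, ← roots_map_intMinpoly hα]
  exact sum_posLog_norm_inv_roots_le_log_mahlerMeasure h_coeff

theorem sum_algHom_apply_eq_finrank_nsmul_sum_aroots {F L E M : Type*} [Field F] [Field L]
    [Field E] [Algebra F L] [Algebra F E] [FiniteDimensional F L] [Algebra.IsSeparable F L]
    [IsAlgClosed E] [AddCommMonoid M] (x : L) (g : E → M) :
    ∑ σ : L →ₐ[F] E, g (σ x) =
      finrank F⟮x⟯ L • (((minpoly F x).aroots E).map g).sum := by
  classical
  have hx : IsIntegral F x := .of_finite F x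
  have h_nodup : ((minpoly F x).aroots E).Nodup :=
    nodup_roots (Separable.map (Algebra.IsSeparable.isSeparable F x))
  have : Algebra.IsSeparable F⟮x⟯ L := Algebra.isSeparable_tower_top_of_isSeparable F _ L
  calc ∑ σ : L →ₐ[F] E, g (σ x)
      = ∑ τ : F⟮x⟯ →ₐ[F] E, finrank F⟮x⟯ L • g (τ (AdjoinSimple.gen F x)) := by
        rw [Fintype.sum_equiv algHomEquivSigma (fun σ : L →ₐ[F] E ↦ g (σ x))
          (fun σ ↦ g (σ.1 (AdjoinSimple.gen F x))) fun σ ↦ rfl,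
          ← Finset.univ_sigma_univ, Finset.sum_sigma]
        refine Finset.sum_congr rfl fun τ _ ↦ ?_
        let : Algebra F⟮x⟯ E := τ.toRingHom.toAlgebra
        simp_rw [Finset.sum_const, Finset.card_univ, ← AlgHom.card F⟮x⟯ L E]
    _ = finrank F⟮x⟯ L • ∑ τ : F⟮x⟯ →ₐ[F] E, g (τ (AdjoinSimple.gen F x)) :=
        Finset.sum_nsmul ..
    _ = finrank F⟮x⟯ L • ∑ z : {z // z ∈ (minpoly F x).aroots E}, g z := by
        rw [Fintype.sum_equiv (algHomAdjoinIntegralEquiv F hx) _ (fun z ↦ g z) fun τ ↦ ?_]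
        rw [← algHomAdjoinIntegralEquiv_symm_apply_gen F hx, Equiv.symm_apply_apply]
    _ = finrank F⟮x⟯ L • (((minpoly F x).aroots E).map g).sum := by
        rw [← Finset.sum_subtype _ (fun z ↦ Multiset.mem_toFinset) g, Finset.sum,
          Multiset.toFinset_val, h_nodup.dedup]

theorem sum_posLog_norm_inv_le_finrank_mul_height {K : Type*} [Field K] [Algebra ℚ K]
    [FiniteDimensional ℚ K] (ι : K →ₐ[ℚ] ℂ) (x : K) :
    ∑ σ : K →ₐ[ℚ] ℂ, log⁺ ‖(σ x)⁻¹‖ ≤ finrank ℚ K * height (ι x) := by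
  have : CharZero K := algebraRat.charZero K
  have hx : IsIntegral ℚ x := .of_finite ℚ x
  have h_minpoly : minpoly ℚ (ι x) = minpoly ℚ x := minpoly.algHom_eq ι ι.injective x
  have h_finrank : (finrank ℚ K : ℝ) = finrank ℚ⟮x⟯ K * (minpoly ℚ x).natDegree := by
    rw [← adjoin.finrank hx, mul_comm]
    exact_mod_cast (finrank_mul_finrank ℚ ℚ⟮x⟯ K).symm
  have h_le := sum_posLog_norm_inv_aroots_minpoly_le (hx.map ι).isAlgebraic
  rw [sum_algHom_apply_eq_finrank_nsmul_sum_aroots x fun z : ℂ ↦ log⁺ ‖z⁻¹‖, nsmul_eq_mul,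
    h_finrank, mul_assoc, ← h_minpoly]
  gcongr

theorem le_sum_height_of_forall_le_sum_posLog {K J : Type*} [Field K] [Algebra ℚ K]
    [FiniteDimensional ℚ K] [Fintype J] (ι : K →ₐ[ℚ] ℂ) (x : J → K) {c : ℝ}
    (hc : ∀ σ : K →ₐ[ℚ] ℂ, c ≤ ∑ j, log⁺ ‖(σ (x j))⁻¹‖) :
    c ≤ ∑ j, height (ι (x j)) := by
  have : CharZero K := algebraRat.charZero K
  have h_finrank : (0 : ℝ) < finrank ℚ K := Nat.cast_pos.mpr finrank_pos
  refine le_of_mul_le_mul_left ?_ h_finrank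
  calc finrank ℚ K * c
      = ∑ _σ : K →ₐ[ℚ] ℂ, c := by
        rw [Finset.sum_const, Finset.card_univ, AlgHom.card, nsmul_eq_mul]
    _ ≤ ∑ σ : K →ₐ[ℚ] ℂ, ∑ j, log⁺ ‖(σ (x j))⁻¹‖ := Finset.sum_le_sum fun σ _ ↦ hc σ
    _ = ∑ j, ∑ σ : K →ₐ[ℚ] ℂ, log⁺ ‖(σ (x j))⁻¹‖ := Finset.sum_comm
    _ ≤ ∑ j, finrank ℚ K * height (ι (x j)) :=
        Finset.sum_le_sum fun j _ ↦ sum_posLog_norm_inv_le_finrank_mul_height ι (x j)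
    _ = finrank ℚ K * ∑ j, height (ι (x j)) := (Finset.mul_sum ..).symm

end Height

section Archimedean

open Real

theorem five_mul_norm_one_sub_le {u : ℂ} (hu : ‖u‖ ≤ 1) : 5 * ‖1 - u‖ ≤ ‖9 - u‖ := by
  have h_re : -1 ≤ u.re := (abs_le.mp ((Complex.abs_re_le_norm u).trans hu)).1
  have h_sq : ‖u‖ ^ 2 ≤ 1 := pow_le_one₀ (norm_nonneg u) hu
  rw [← sq_le_sq₀ (by positivity) (by positivity), mul_pow]
  simp only [Complex.sq_norm, Complex.normSq_apply, Complex.sub_re, Complex.sub_im,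
    Complex.one_re, Complex.one_im, Complex.re_ofNat, Complex.im_ofNat] at h_sq ⊢
  nlinarith

theorem five_mul_norm_one_sub_le_of_one_le_re {w : ℂ} (hw : 1 ≤ w.re) :
    5 * ‖1 - w‖ ≤ ‖w‖ * ‖3 + w‖ := by
  rw [← sq_le_sq₀ (by positivity) (by positivity), mul_pow, mul_pow, ← sub_nonneg]
  have h_eq : ‖w‖ ^ 2 * ‖3 + w‖ ^ 2 - 5 ^ 2 * ‖1 - w‖ ^ 2 =
      (‖w‖ ^ 2 - 5) ^ 2 + (w.re - 1) * (6 * ‖w‖ ^ 2 + 50) := by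
    simp only [Complex.sq_norm, Complex.normSq_apply, Complex.sub_re, Complex.sub_im,
      Complex.add_re, Complex.add_im, Complex.one_re, Complex.one_im, Complex.re_ofNat,
      Complex.im_ofNat]
    ring
  rw [h_eq]
  exact add_nonneg (sq_nonneg _) (mul_nonneg (sub_nonneg.mpr hw) (by positivity))

theorem five_mul_norm_one_sub_sq_le_of_abs_re_le_one {w : ℂ} (h_re : |w.re| ≤ 1)
    (h_norm : 1 ≤ ‖w‖) : 5 * ‖1 - w ^ 2‖ ≤ ‖w‖ * ‖9 - w ^ 2‖ := by
  rw [← sq_le_sq₀ (by positivity) (by positivity), mul_pow, mul_pow, ← sub_nonneg]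
  -- For fixed `‖w‖` the difference is affine in `w.re ^ 2`: interpolate between its values at
  -- `w.re ^ 2 = 0` and `w.re ^ 2 = 1`, which vanish for `w = ±i` and `w = ±1 ± 2i` respectively.
  have h_eq : ‖w‖ ^ 2 * ‖9 - w ^ 2‖ ^ 2 - 5 ^ 2 * ‖1 - w ^ 2‖ ^ 2 =
      (1 - w.re ^ 2) * ((‖w‖ ^ 2 - 1) * ((‖w‖ ^ 2 - 3) ^ 2 + 16)) +
        w.re ^ 2 * ((‖w‖ ^ 2 - 5) ^ 2 * (‖w‖ ^ 2 + 3)) := by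
    simp only [Complex.sq_norm, Complex.normSq_apply, Complex.sub_re, Complex.sub_im, pow_two w,
      Complex.mul_re, Complex.mul_im, Complex.one_re, Complex.one_im, Complex.re_ofNat,
      Complex.im_ofNat]
    ring
  have h_re_sq : 0 ≤ 1 - w.re ^ 2 := sub_nonneg.mpr ((sq_le_one_iff_abs_le_one _).mpr h_re)
  have h_norm_sq : 0 ≤ ‖w‖ ^ 2 - 1 := sub_nonneg.mpr (one_le_pow₀ h_norm)
  rw [h_eq]
  positivity

theorem five_mul_norm_one_sub_mul_norm_one_add_le (w : ℂ) :
    5 * (‖1 - w‖ * ‖1 + w‖) ≤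
      max 1 ‖w‖ * max ‖1 - w‖ ‖3 + w‖ * max ‖1 + w‖ ‖w - 3‖ := by
  have h_one : ‖1 - w‖ * ‖1 + w‖ = ‖1 - w ^ 2‖ := by rw [← norm_mul]; ring_nf
  have h_nine : ‖3 + w‖ * ‖w - 3‖ = ‖9 - w ^ 2‖ := by
    rw [← norm_neg (w - 3), ← norm_mul]; ring_nf
  rcases le_total ‖w‖ 1 with h_norm | h_norm
  · calc 5 * (‖1 - w‖ * ‖1 + w‖) ≤ 1 * ‖3 + w‖ * ‖w - 3‖ := by
          rw [one_mul, h_one, h_nine]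
          exact five_mul_norm_one_sub_le
            ((norm_pow w 2).trans_le (pow_le_one₀ (norm_nonneg w) h_norm))
      _ ≤ _ := by gcongr <;> simp
  rcases le_total 1 w.re with h_right | h_right
  · calc 5 * (‖1 - w‖ * ‖1 + w‖) = 5 * ‖1 - w‖ * ‖1 + w‖ := (mul_assoc ..).symm
      _ ≤ ‖w‖ * ‖3 + w‖ * ‖1 + w‖ := by
          gcongr ?_ * _
          exact five_mul_norm_one_sub_le_of_one_le_re h_right
      _ ≤ _ := by gcongr <;> simp
  rcases le_total w.re (-1) with h_left | h_left
  · calc 5 * (‖1 - w‖ * ‖1 + w‖) = 5 * ‖1 - -w‖ * ‖1 - w‖ := by rw [sub_neg_eq_add]; ring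
      _ ≤ ‖-w‖ * ‖3 + -w‖ * ‖1 - w‖ := by
          gcongr ?_ * _
          exact five_mul_norm_one_sub_le_of_one_le_re (by simpa using le_neg_of_le_neg h_left)
      _ = ‖w‖ * ‖1 - w‖ * ‖w - 3‖ := by rw [norm_neg, ← sub_eq_add_neg, norm_sub_rev 3]; ring
      _ ≤ _ := by gcongr <;> simp
  · calc 5 * (‖1 - w‖ * ‖1 + w‖) ≤ ‖w‖ * ‖3 + w‖ * ‖w - 3‖ := by
          rw [mul_assoc, h_one, h_nine]
          exact five_mul_norm_one_sub_sq_le_of_abs_re_le_one (abs_le.mpr ⟨h_left, h_right⟩) h_norm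
      _ ≤ _ := by gcongr <;> simp

/-- At a pole of `σ` or `σ²` the junk value `x / 0 = 0` and `log⁺ 0 = 0` give the correct
contribution `log⁺ |1/∞| = 0`, so `z = ±1/3` is allowed. -/
theorem log_five_le_sum_posLog_norm_inv {z : ℂ} (h0 : z ≠ 0) (h1 : z ≠ 1) (h_neg : z ≠ -1) :
    log 5 ≤ log⁺ ‖z⁻¹‖ + log⁺ ‖((z - 1) / (3 * z + 1))⁻¹‖ +
      log⁺ ‖((z + 1) / (1 - 3 * z))⁻¹‖ := by
  obtain ⟨w, rfl⟩ : ∃ w : ℂ, z = w⁻¹ := ⟨z⁻¹, (inv_inv z).symm⟩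
  have hw : w ≠ 0 := by simpa using h0
  have hw_sub : 1 - w ≠ 0 := fun h ↦ h1 (by simp [← sub_eq_zero.mp h])
  have hw_add : 1 + w ≠ 0 := fun h ↦ h_neg (by simp [eq_neg_of_add_eq_zero_right h])
  have h_sigma : ((w⁻¹ - 1) / (3 * w⁻¹ + 1))⁻¹ = (3 + w) / (1 - w) := by
    rw [inv_div]; field_simp
  have h_sigma_sq : ((w⁻¹ + 1) / (1 - 3 * w⁻¹))⁻¹ = (w - 3) / (1 + w) := by
    rw [inv_div]; field_simp
  have max_one_div {x y : ℂ} (hx : x ≠ 0) : max 1 ‖y / x‖ = max ‖x‖ ‖y‖ / ‖x‖ := by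
    rw [norm_div, ← div_self (norm_ne_zero_iff.mpr hx), max_div_div_right (norm_nonneg x)]
  rw [inv_inv, h_sigma, h_sigma_sq, posLog_eq_log_max_one (norm_nonneg _),
    posLog_eq_log_max_one (norm_nonneg _), posLog_eq_log_max_one (norm_nonneg _),
    ← log_mul (by positivity) (by positivity), ← log_mul (by positivity) (by positivity),
    max_one_div hw_sub, max_one_div hw_add, mul_div_assoc', mul_div_assoc', div_mul_eq_mul_div,
    div_div]
  refine log_le_log (by norm_num) ((le_div_iff₀ (by positivity)).mpr ?_)
  exact five_mul_norm_one_sub_mul_norm_one_add_le w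

end Archimedean

section Quadratic

open Real

theorem mahlerMeasure_eq_abs_leadingCoeff {f : ℤ[X]}
    (hf : ∀ z ∈ (f.map (Int.castRingHom ℂ)).roots, ‖z‖ ≤ 1) :
    _root_.mahlerMeasure f = |(f.leadingCoeff : ℝ)| := by
  rw [_root_.mahlerMeasure, Multiset.map_congr rfl fun z hz ↦ max_eq_right (hf z hz)]
  simp

theorem isPrimitive_of_isUnit_coeff {R : Type*} [CommSemiring R] {f : R[X]} {n : ℕ}
    (hf : IsUnit (f.coeff n)) : f.IsPrimitive := fun r hr ↦
  isUnit_of_dvd_unit (C_dvd_iff_dvd_coeff r f |>.mp hr n) hf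

theorem mul_normSq_eq_of_discrim_neg {a b c : ℝ} (h_discrim : discrim a b c < 0) {z : ℂ}
    (hz : a * (z * z) + b * z + c = 0) : a * Complex.normSq z = c := by
  have h_re := congrArg Complex.re hz
  have h_im := congrArg Complex.im hz
  simp only [Complex.add_re, Complex.add_im, Complex.mul_re, Complex.mul_im,
    Complex.ofReal_re, Complex.ofReal_im, Complex.zero_re,
    Complex.zero_im] at h_re h_im
  have hz_im : z.im ≠ 0 := by
    intro h
    refine h_discrim.not_ge ?_
    rw [discrim_eq_sq_of_quadratic_eq_zero (x := z.re) (by simpa [h] using h_re)]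
    positivity
  have hb : b = -(2 * a * z.re) := mul_right_cancel₀ hz_im (by linear_combination h_im)
  rw [Complex.normSq_apply]
  rw [hb] at h_re
  linear_combination -h_re

theorem ne_zero_of_discrim_neg {R : Type*} [CommRing R] [LinearOrder R] [IsStrictOrderedRing R]
    {a b c : R} (h : discrim a b c < 0) : a ≠ 0 := by
  rintro rfl
  rw [discrim, mul_zero, zero_mul, sub_zero] at h
  exact h.not_ge (sq_nonneg b)

theorem intCast_discrim {R : Type*} [CommRing R] (a b c : ℤ) :
    ((discrim a b c : ℤ) : R) = discrim (a : R) b c := by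
  simp [discrim]

variable {a b c : ℤ}

theorem irreducible_quadratic_of_discrim_neg
    (h_prim : (C a * X ^ 2 + C b * X + C c).IsPrimitive) (h_discrim : discrim a b c < 0) :
    Irreducible (C a * X ^ 2 + C b * X + C c) := by
  rw [IsPrimitive.Int.irreducible_iff_irreducible_map_cast h_prim]
  refine irreducible_of_degree_le_three_of_not_isRoot ?_ fun q hq ↦ ?_
  · rw [natDegree_map_eq_of_injective (Int.castRingHom ℚ).injective_int,
      natDegree_quadratic (ne_zero_of_discrim_neg h_discrim)]
    decide
  · refine quadratic_ne_zero_of_discrim_ne_sq (a := (a : ℚ)) (b := b) (c := c) (fun s hs ↦ ?_) q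
      (by simpa [pow_two] using hq)
    rw [← intCast_discrim] at hs
    exact (Int.cast_lt_zero.mpr h_discrim).not_ge (hs ▸ sq_nonneg s)

theorem mahlerMeasure_quadratic_eq_abs_of_discrim_neg (h_discrim : discrim a b c < 0)
    (hca : |c| ≤ |a|) :
    _root_.mahlerMeasure (C a * X ^ 2 + C b * X + C c) = |(a : ℝ)| := by
  have ha : a ≠ 0 := ne_zero_of_discrim_neg h_discrim
  have ha_pos : 0 < |(a : ℝ)| := abs_pos.mpr (Int.cast_ne_zero.mpr ha)
  have h_discrim_real : discrim (a : ℝ) b c < 0 := by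
    rw [← intCast_discrim]
    exact Int.cast_lt_zero.mpr h_discrim
  rw [mahlerMeasure_eq_abs_leadingCoeff fun z hz ↦ ?_, leadingCoeff_quadratic ha]
  have h_root : ((a : ℝ) : ℂ) * (z * z) + (b : ℝ) * z + (c : ℝ) = 0 := by
    simpa [pow_two] using isRoot_of_mem_roots hz
  have h_norm : |(a : ℝ)| * ‖z‖ ^ 2 ≤ |(a : ℝ)| * 1 := by
    rw [mul_one, Complex.sq_norm, ← abs_of_nonneg (Complex.normSq_nonneg z), ← abs_mul,
      mul_normSq_eq_of_discrim_neg h_discrim_real h_root]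
    exact_mod_cast hca
  exact (sq_le_one_iff₀ (norm_nonneg z)).mp (le_of_mul_le_mul_left h_norm ha_pos)

theorem height_eq_log_div_two_of_discrim_neg
    (h_prim : (C a * X ^ 2 + C b * X + C c).IsPrimitive) (h_discrim : discrim a b c < 0)
    (hca : |c| ≤ |a|) {α : ℂ} (hα : a * (α * α) + b * α + c = 0) :
    height α = log a / 2 := by
  have h_root : aeval α (C a * X ^ 2 + C b * X + C c) = 0 := by simpa [pow_two] using hα
  rw [height_eq_of_irreducible (irreducible_quadratic_of_discrim_neg h_prim h_discrim) h_root,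
    mahlerMeasure_quadratic_eq_abs_of_discrim_neg h_discrim hca, log_abs,
    natDegree_quadratic (ne_zero_of_discrim_neg h_discrim), Nat.cast_ofNat]

end Quadratic

section OrderThreeOrbit

open Real IntermediateField Complex

theorem log_five_le_height_add_height_add_height {α : ℂ} (hα : IsAlgebraic ℚ α) (h0 : α ≠ 0)
    (h1 : α ≠ 1) (h_neg : α ≠ -1) :
    Real.log 5 ≤
      height α + height ((α - 1) / (3 * α + 1)) + height ((α + 1) / (1 - 3 * α)) := by
  have : FiniteDimensional ℚ ℚ⟮α⟯ := adjoin.finiteDimensional hα.isIntegral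
  let a : ℚ⟮α⟯ := AdjoinSimple.gen ℚ α
  have ha : ℚ⟮α⟯.val a = α := AdjoinSimple.coe_gen ℚ α
  have ha0 : a ≠ 0 := fun h ↦ h0 (by simp [← ha, h])
  have ha1 : a ≠ 1 := fun h ↦ h1 (by simp [← ha, h])
  have ha_neg : a ≠ -1 := fun h ↦ h_neg (by simp [← ha, h])
  let orbit : Fin 3 → ℚ⟮α⟯ := ![a, (a - 1) / (3 * a + 1), (a + 1) / (1 - 3 * a)]
  have h_local (τ : ℚ⟮α⟯ →ₐ[ℚ] ℂ) : Real.log 5 ≤ ∑ j, log⁺ ‖(τ (orbit j))⁻¹‖ := by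
    have h := log_five_le_sum_posLog_norm_inv ((map_ne_zero τ).mpr ha0)
      ((map_ne_one_iff τ τ.injective).mpr ha1) fun h ↦ ha_neg (τ.injective (by simpa using h))
    simpa [orbit, Fin.sum_univ_three, map_ofNat] using h
  simpa [-coe_val, orbit, Fin.sum_univ_three, map_ofNat, ha] using
    le_sum_height_of_forall_le_sum_posLog ℚ⟮α⟯.val orbit h_local

theorem height_I : height I = 0 := by
  simpa using height_eq_log_div_two_of_discrim_neg (a := 1) (b := 0) (c := 1)
    (isPrimitive_of_isUnit_coeff (n := 0) (by simp)) (by norm_num [discrim]) (by norm_num)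
    (α := I) (by simp)

theorem height_I_sub_one_div_three_mul_I_add_one :
    height ((I - 1) / (3 * I + 1)) = Real.log 5 / 2 := by
  have h_denom : 3 * I + 1 ≠ 0 := fun h ↦ by simpa using congrArg re h
  have h_eq : (I - 1) / (3 * I + 1) = (1 + 2 * I) / 5 := by
    rw [div_eq_iff h_denom]
    linear_combination -6 / 5 * I_sq
  refine height_eq_log_div_two_of_discrim_neg (a := 5) (b := -2) (c := 1)
    (isPrimitive_of_isUnit_coeff (n := 0) (by simp)) (by norm_num [discrim]) (by norm_num) ?_
  rw [h_eq]
  push_cast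
  linear_combination 4 / 5 * I_sq

theorem height_I_add_one_div_one_sub_three_mul_I :
    height ((I + 1) / (1 - 3 * I)) = Real.log 5 / 2 := by
  have h_denom : 1 - 3 * I ≠ 0 := fun h ↦ by simpa using congrArg re h
  have h_eq : (I + 1) / (1 - 3 * I) = (-1 + 2 * I) / 5 := by
    rw [div_eq_iff h_denom]
    linear_combination 6 / 5 * I_sq
  refine height_eq_log_div_two_of_discrim_neg (a := 5) (b := 2) (c := 1)
    (isPrimitive_of_isUnit_coeff (n := 0) (by simp)) (by norm_num [discrim]) (by norm_num) ?_
  rw [h_eq]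
  push_cast
  linear_combination 4 / 5 * I_sq

end OrderThreeOrbit

/-- Row 4 of Table 1: for `σ(z) = (z - 1)/(3z + 1)`, of order `3`, with
`σ²(z) = (z + 1)/(1 - 3z)`: for every algebraic `α ∉ {0, 1, -1}` one has
`h(α) + h(σ(α)) + h(σ²(α)) ≥ log 5`, with equality at `α = i`. -/
theorem table1_row4 :
    (∀ α : ℂ, IsAlgebraic ℚ α → α ≠ 0 → α ≠ 1 → α ≠ -1 →
      height α + height ((α - 1) / (3 * α + 1)) + height ((α + 1) / (1 - 3 * α))
        ≥ Real.log 5) ∧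
    height Complex.I + height ((Complex.I - 1) / (3 * Complex.I + 1)) +
        height ((Complex.I + 1) / (1 - 3 * Complex.I)) = Real.log 5 := by
  refine ⟨fun α ↦ log_five_le_height_add_height_add_height, ?_⟩
  rw [height_I, height_I_sub_one_div_three_mul_I_add_one,
    height_I_add_one_div_one_sub_three_mul_I, zero_add, add_halves]
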